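/- Let 𝒫 ⊂ 𝒟 be a mutually absolutely continuous set of laws with Lebesgue density on ℝ^d, and let 𝒫_* denote the set of all finite convex mixtures of elements of 𝒫. Then the closed fork-convex hull of the i.i.d. laws 𝒫^∞ contains all i.i.d. laws over finite mixtures: cl-f-conv(𝒫^∞) ⊇ (𝒫_*)^∞. -/

import Mathlib

open MeasureTheory ProbabilityTheory Filter Finset Matrix
open scoped Classical

noncomputable section

namespace SeqTest

/-- `ℝ^d`. -/
abbrev RV (d : ℕ) := Fin d → ℝ

/-- The sequence space `Ω = (ℝ^d)^ℕ`. -/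
abbrev Seq (d : ℕ) := ℕ → RV d

variable (d : ℕ)


/-- The first `t` coordinates of a sequence. -/
def prefixMap (t : ℕ) : Seq d → (Fin t → RV d) := fun ω s => ω s

/-- The law of the first `t` coordinates under a sequential law `μ`. -/
def prefixLaw (μ : Measure (Seq d)) (t : ℕ) : Measure (Fin t → RV d) :=
  μ.map (prefixMap d t)

/-- The natural filtration of the coordinate process: `ℱ t = σ(X_0, …, X_{t-1})`. -/
def F : Filtration ℕ (inferInstance : MeasurableSpace (Seq d)) where
  seq t := ⨆ s ∈ Finset.range t, MeasurableSpace.comap (fun ω : Seq d => ω s) inferInstance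
  mono' := by
    intro i j hij
    exact biSup_mono fun s hs => Finset.mem_range.mpr
      (lt_of_lt_of_le (Finset.mem_range.mp hs) hij)
  le' := by
    intro t
    refine iSup₂_le fun s _ => ?_
    exact measurable_iff_comap_le.mp (measurable_pi_apply s)

/-- Local absolute continuity of sequential laws: every prefix law of `μ` is
absolutely continuous w.r.t. the corresponding prefix law of `Γ`. -/
def LocAC (μ Γ : Measure (Seq d)) : Prop := ∀ t, prefixLaw d μ t ≪ prefixLaw d Γ t

/-- The density (likelihood-ratio) process `Z_t^μ = d(μ|_t)/d(Γ|_t)` evaluated along the path. -/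
def Z (μ Γ : Measure (Seq d)) (t : ℕ) (ω : Seq d) : ℝ :=
  ((prefixLaw d μ t).rnDeriv (prefixLaw d Γ t) (prefixMap d t ω)).toReal

/-- The standard Gaussian measure on `ℝ^d`. -/
def stdGaussian : Measure (RV d) := Measure.pi fun _ => gaussianReal 0 1

/-- `Γ` is the law of an i.i.d. sequence of standard Gaussians: characterized through its
finite-dimensional rectangle probabilities. -/
def IsGamma (Γ : Measure (Seq d)) : Prop :=
  IsProbabilityMeasure Γ ∧
    ∀ (t : ℕ) (A : Fin t → Set (RV d)), (∀ s, MeasurableSet (A s)) →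
      prefixLaw d Γ t (Set.univ.pi A) = ∏ s, stdGaussian d (A s)

/-- `M` is a nonnegative supermartingale for the sequential law `μ`
(w.r.t. the natural filtration). -/
def IsNSM (μ : Measure (Seq d)) (M : ℕ → Seq d → ℝ) : Prop :=
  (∀ t ω, 0 ≤ M t ω) ∧ Supermartingale M (F d) μ

/-- `M` is a nonnegative martingale for the sequential law `μ`. -/
def IsNM (μ : Measure (Seq d)) (M : ℕ → Seq d → ℝ) : Prop :=
  (∀ t ω, 0 ≤ M t ω) ∧ Martingale M (F d) μ


/-- `R` is the `(s,h)`-fork-convex combination of `P` with `Q` (relative to the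
reference law `Γ`), described through its density process. -/
def IsFCC (Γ P Q : Measure (Seq d)) (s : ℕ) (h : Seq d → ℝ) (R : Measure (Seq d)) : Prop :=
  IsProbabilityMeasure P ∧ IsProbabilityMeasure Q ∧ LocAC d P Γ ∧ LocAC d Q Γ ∧
  Measurable[F d s] h ∧ (∀ ω, h ω ∈ Set.Icc (0 : ℝ) 1) ∧
  Γ {ω | h ω < 1 ∧ Z d Q Γ s ω = 0} = 0 ∧
  IsProbabilityMeasure R ∧ LocAC d R Γ ∧
  ∀ t : ℕ, (fun ω => Z d R Γ t ω) =ᵐ[Γ]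
    (fun ω => if t ≤ s then Z d P Γ t ω
      else h ω * Z d P Γ t ω + (1 - h ω) * Z d Q Γ t ω * (Z d P Γ s ω / Z d Q Γ s ω))

/-- A set of sequential laws is fork-convex if it is closed under fork-convex combinations. -/
def IsForkConvex (Γ : Measure (Seq d)) (S : Set (Measure (Seq d))) : Prop :=
  ∀ P ∈ S, ∀ Q ∈ S, ∀ (s : ℕ) (h : Seq d → ℝ) (R : Measure (Seq d)),
    IsFCC d Γ P Q s h R → R ∈ S

/-- The fork-convex hull: the smallest fork-convex set containing `𝔓`. -/
def fconv (Γ : Measure (Seq d)) (𝔓 : Set (Measure (Seq d))) : Set (Measure (Seq d)) :=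
  ⋂₀ {S | 𝔓 ⊆ S ∧ IsForkConvex d Γ S}

/-- Convergence of sequential laws: the density processes converge in `L¹(Γ)` at every fixed time. -/
def TendstoLocL1 (Γ : Measure (Seq d)) (Pn : ℕ → Measure (Seq d)) (P : Measure (Seq d)) : Prop :=
  ∀ t, Tendsto (fun n => ∫ ω, |Z d (Pn n) Γ t ω - Z d P Γ t ω| ∂Γ) atTop (nhds 0)

/-- The closed fork-convex hull: the closure of the fork-convex hull under local `L¹(Γ)`
convergence of density processes. -/
def clfconv (Γ : Measure (Seq d)) (𝔓 : Set (Measure (Seq d))) : Set (Measure (Seq d)) :=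
  {P | IsProbabilityMeasure P ∧ LocAC d P Γ ∧
    ∃ Pn : ℕ → Measure (Seq d), (∀ n, Pn n ∈ fconv d Γ 𝔓) ∧ TendstoLocL1 d Γ Pn P}

/-- `μ` is the law of an i.i.d. sequence with marginal `P`. -/
def IsIIDLaw (μ : Measure (Seq d)) (P : Measure (RV d)) : Prop :=
  IsProbabilityMeasure μ ∧
    ∀ (t : ℕ) (A : Fin t → Set (RV d)), (∀ s, MeasurableSet (A s)) →
      prefixLaw d μ t (Set.univ.pi A) = ∏ s, P (A s)

/-- `μ` is the law of an independent sequence with marginals `Ps 0, Ps 1, …`. -/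
def IsProductLaw (μ : Measure (Seq d)) (Ps : ℕ → Measure (RV d)) : Prop :=
  IsProbabilityMeasure μ ∧
    ∀ (t : ℕ) (A : Fin t → Set (RV d)), (∀ s, MeasurableSet (A s)) →
      prefixLaw d μ t (Set.univ.pi A) = ∏ s : Fin t, Ps s (A s)

/-- The set of i.i.d. sequential laws with marginals in `PP`. -/
def iidLaws (PP : Set (Measure (RV d))) : Set (Measure (Seq d)) :=
  {μ | ∃ P ∈ PP, IsIIDLaw d μ P}

/-- The set of independent-product sequential laws with all marginals in `PP`. -/
def productLaws (PP : Set (Measure (RV d))) : Set (Measure (Seq d)) :=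
  {μ | ∃ Ps : ℕ → Measure (RV d), (∀ t, Ps t ∈ PP) ∧ IsProductLaw d μ Ps}




/-- The density of the `d`-dimensional Gaussian with mean `m` and covariance matrix `S`. -/
def gaussDensityFn (m : RV d) (S : Matrix (Fin d) (Fin d) ℝ) (x : RV d) : ℝ :=
  (2 * Real.pi) ^ (-(d : ℝ) / 2) * S.det ^ (-(1 : ℝ) / 2) *
    Real.exp (-(1 / 2) * ((x - m) ⬝ᵥ (S⁻¹ *ᵥ (x - m))))

/-- A finite mixture of nondegenerate Gaussian densities. -/
def IsGaussianMixture (g : RV d → ℝ) : Prop :=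
  ∃ (k : ℕ) (α : Fin k → ℝ) (ms : Fin k → RV d) (Ss : Fin k → Matrix (Fin d) (Fin d) ℝ),
    (∀ i, 0 ≤ α i) ∧ (∑ i, α i = 1) ∧ (∀ i, (Ss i).PosDef) ∧
    g = fun x => ∑ i, α i * gaussDensityFn d (ms i) (Ss i) x

/-- A log-concave nonnegative function on `ℝ^d`. -/
def IsLogConcaveFn (p : RV d → ℝ) : Prop :=
  (∀ x, 0 ≤ p x) ∧
    ∀ (x y : RV d) (l : ℝ), 0 ≤ l → l ≤ 1 →
      p x ^ l * p y ^ (1 - l) ≤ p (l • x + (1 - l) • y)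

/-- A log-concave probability density on `ℝ^d`. -/
def IsLogConcaveDensity (p : RV d → ℝ) : Prop :=
  Measurable p ∧ IsLogConcaveFn d p ∧ ∫ x, p x = 1

/-- The set `𝓛` of laws on `ℝ^d` with a log-concave Lebesgue density. -/
def logConcaveLaws : Set (Measure (RV d)) :=
  {P | IsProbabilityMeasure P ∧ ∃ p : RV d → ℝ, Measurable p ∧ IsLogConcaveFn d p ∧
    P = volume.withDensity fun x => ENNReal.ofReal (p x)}

/-- The set `𝒢` of nondegenerate Gaussian laws on `ℝ^d`. -/
def gaussianLaws : Set (Measure (RV d)) :=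
  {P | ∃ (m : RV d) (S : Matrix (Fin d) (Fin d) ℝ), S.PosDef ∧
    P = volume.withDensity fun x => ENNReal.ofReal (gaussDensityFn d m S x)}

/-- An estimator sequence: a measurable family of (strictly positive) predictable
probability density estimates. -/
def IsEstimatorSeq (E : (t : ℕ) → (Fin t → RV d) → RV d → ℝ) : Prop :=
  (∀ t, Measurable fun q : (Fin t → RV d) × RV d => E t q.1 q.2) ∧
  (∀ t h x, 0 < E t h x) ∧ (∀ t h, ∫ x, E t h x = 1)

/-- The universal likelihood ratio (ULR) process. Time `t` corresponds to having observed
the `t` samples `ω 0, …, ω (t-1)`. -/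
def ULR (E : (t : ℕ) → (Fin t → RV d) → RV d → ℝ) (t : ℕ) (ω : Seq d) : ℝ :=
  if t ≤ d then 1 else
    (∏ j ∈ Finset.Ico d t, E j (fun i : Fin j => ω i) (ω j)) /
      ⨆ p : {p : RV d → ℝ // IsLogConcaveDensity d p}, ∏ j ∈ Finset.Ico d t, p.1 (ω j)

/-- The prediction (cumulative log-loss) regret of the estimator sequence `E` relative to
the density of `P`. -/
def regret (P : Measure (RV d)) (E : (t : ℕ) → (Fin t → RV d) → RV d → ℝ)
    (t : ℕ) (ω : Seq d) : ℝ :=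
  ∑ j ∈ Finset.range t,
    (Real.log ((P.rnDeriv volume (ω j)).toReal) - Real.log (E j (fun i : Fin j => ω i) (ω j)))

/-- The Hellinger distance between two laws on `ℝ^d` (via their Lebesgue densities). -/
def hellinger (P Q : Measure (RV d)) : ℝ :=
  Real.sqrt ((1 / 2) *
    ∫ x, (Real.sqrt ((P.rnDeriv volume x).toReal) - Real.sqrt ((Q.rnDeriv volume x).toReal)) ^ 2)

/-- The Hellinger distance from `P` to the class of log-concave laws. -/
def dHLC (P : Measure (RV d)) : ℝ :=
  sInf {r | ∃ L ∈ logConcaveLaws d, r = hellinger d P L}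

/-- The Kullback–Leibler divergence. -/
def klDivR {α : Type*} [MeasurableSpace α] (P Q : Measure α) : EReal :=
  if P ≪ Q ∧ Integrable (fun x => Real.log ((P.rnDeriv Q x).toReal)) P
  then ((∫ x, Real.log ((P.rnDeriv Q x).toReal) ∂P : ℝ) : EReal) else ⊤

/-- Membership in `𝒟₁`. -/
def MemD1 (P : Measure (RV d)) : Prop :=
  IsProbabilityMeasure P ∧ P ≪ volume ∧
  Integrable (fun x => max 0 (Real.log ((P.rnDeriv volume x).toReal))) P ∧
  Integrable (fun x => Real.sqrt (∑ i, (x i) ^ 2)) P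

/-- The log-likelihood gap `σ_t(P)` between the true density and the log-concave maximum
likelihood. -/
def sigmaT (P : Measure (RV d)) (t : ℕ) (ω : Seq d) : ℝ :=
  (∑ j ∈ Finset.range t, Real.log ((P.rnDeriv volume (ω j)).toReal)) -
    ⨆ p : {p : RV d → ℝ // IsLogConcaveDensity d p},
      ∑ j ∈ Finset.range t, Real.log (p.1 (ω j))

/-- The mean vector of `P`. -/
def meanVec (P : Measure (RV d)) : RV d := fun i => ∫ x, x i ∂P

/-- `Δ_P = min_{‖v‖=1} E_P |⟨v, X − E_P X⟩|`. -/
def DeltaP (P : Measure (RV d)) : ℝ :=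
  sInf {r | ∃ v : RV d, (∑ i, (v i) ^ 2) = 1 ∧
    r = ∫ x, |∑ i, v i * (x i - meanVec d P i)| ∂P}

/-- The class `𝒟_{Box,Lip,B}`: laws with a `1`-Lipschitz density supported on `[-1,1]^d`
taking values in `[1/B, B]` there. -/
def DBoxLip (B : ℝ) : Set (Measure (RV d)) :=
  {P | IsProbabilityMeasure P ∧ ∃ p : RV d → ℝ, Measurable p ∧
    P = volume.withDensity (fun x => ENNReal.ofReal (p x)) ∧
    (∀ x, ¬ (∀ i, |x i| ≤ 1) → p x = 0) ∧
    (∀ x, (∀ i, |x i| ≤ 1) → 1 / B ≤ p x ∧ p x ≤ B) ∧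
    (∀ x y, (∀ i, |x i| ≤ 1) → (∀ i, |y i| ≤ 1) →
      |p x - p y| ≤ Real.sqrt (∑ i, (x i - y i) ^ 2))}



/-- The set of finite convex mixtures of elements of `PP`. -/
def finiteMixtures (PP : Set (Measure (RV d))) : Set (Measure (RV d)) :=
  {Q | ∃ (k : ℕ) (α : Fin k → ℝ) (P : Fin k → Measure (RV d)),
    (∀ i, 0 ≤ α i) ∧ (∑ i, α i = 1) ∧ (∀ i, P i ∈ PP) ∧
    Q = ∑ i, (ENNReal.ofReal (α i)) • P i}

/-!
The hull contains the law of an independent sequence with marginals `R₀, …, R_{n-1}, M, M, …` for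
all finite mixtures `R_j` and every `M ∈ PP`, by induction on `n`. Forking at a fixed time from
`R₀, …, R_{n-1}, L, L, …` to `M^∞` gives `R₀, …, R_{n-1}, L, M, M, …` for every `L ∈ PP`,
because the marginals before the fork are absolutely continuous with respect to `M`. Forks at time
`0` are convex combinations of sequential laws, and the product law is affine in its `n`-th
marginal, so `L` may be replaced by the mixture `R_n`. As `n → ∞` the laws of any fixed prefix are
eventually constant, so the closed hull contains every product law whose marginals are finite
mixtures.
-/

theorem prod_piecewise_eq_mul_div {ι 𝕜 : Type*} [DecidableEq ι] [Field 𝕜] {s t : Finset ι}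
    (hst : s ⊆ t) {f g : ι → 𝕜} (hfg : ∀ j ∈ s, g j = 0 → f j = 0) :
    ∏ j ∈ t, s.piecewise f g j = (∏ j ∈ t, g j) * ((∏ j ∈ s, f j) / ∏ j ∈ s, g j) := by
  rw [Finset.prod_piecewise, Finset.inter_eq_right.mpr hst, ← Finset.prod_sdiff hst]
  by_cases hg : ∏ j ∈ s, g j = 0
  · obtain ⟨j, hj, hgj⟩ := Finset.prod_eq_zero_iff.mp hg
    rw [Finset.prod_eq_zero hj (hfg j hj hgj), zero_div, zero_mul, mul_zero]
  · field_simp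

section ConvexCombinations

open scoped NNReal

theorem sum_smul_mem_of_convex {R E ι : Type*} [Semifield R] [LinearOrder R]
    [IsStrictOrderedRing R] [AddCommMonoid E] [Module R E] {C : Set E} (hC : Convex R C)
    {T : Finset ι} {w : ι → R} {z : ι → E} (hw : ∀ i ∈ T, 0 ≤ w i) (hw1 : ∑ i ∈ T, w i = 1)
    (hz : ∀ i ∈ T, z i ∈ C) : ∑ i ∈ T, w i • z i ∈ C := by
  induction T using Finset.induction_on generalizing w with
  | empty => simp at hw1
  | insert i T hi ih =>
    rw [Finset.sum_insert hi] at hw1 ⊢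
    rw [Finset.forall_mem_insert] at hw hz
    rcases (Finset.sum_nonneg hw.2).eq_or_lt with hT | hT
    · have hwT : ∀ j ∈ T, w j = 0 := (Finset.sum_eq_zero_iff_of_nonneg hw.2).mp hT.symm
      have hwi : w i = 1 := by rwa [← hT, add_zero] at hw1
      have hsum : ∑ j ∈ T, w j • z j = 0 :=
        Finset.sum_eq_zero fun j hj => by rw [hwT j hj, zero_smul]
      rw [hwi, hsum, one_smul, add_zero]
      exact hz.1
    · set r := ∑ j ∈ T, w j
      have hrescaled : ∑ j ∈ T, (w j / r) • z j ∈ C :=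
        ih (fun j hj => div_nonneg (hw.2 j hj) hT.le)
          (by rw [← Finset.sum_div, div_self hT.ne']) hz.2
      have hr : r • ∑ j ∈ T, (w j / r) • z j = ∑ j ∈ T, w j • z j := by
        simp only [Finset.smul_sum, smul_smul, mul_div_cancel₀ _ hT.ne']
      exact hr ▸ hC hz.1 hrescaled hw.1 hT.le hw1

theorem convex_setOf_isProbabilityMeasure {α : Type*} [MeasurableSpace α] :
    Convex ℝ≥0 {μ : Measure α | IsProbabilityMeasure μ} := by
  rintro μ ⟨hμ⟩ ν ⟨hν⟩ a b - - hab
  constructor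
  rw [Measure.add_apply, Measure.smul_apply, Measure.smul_apply, hμ, hν, ← add_smul, hab, one_smul]

theorem convex_setOf_absolutelyContinuous {α : Type*} [MeasurableSpace α] (ν : Measure α) :
    Convex ℝ≥0 {μ : Measure α | μ ≪ ν} :=
  fun _ hμ _ hμ' a b _ _ _ => (hμ.smul_left a).add_left (hμ'.smul_left b)

variable {d : ℕ}

theorem finiteMixtures_subset_of_convex {PP C : Set (Measure (RV d))} (hC : Convex ℝ≥0 C)
    (hPP : PP ⊆ C) : finiteMixtures d PP ⊆ C := by
  rintro _ ⟨k, α, P, hα, hα1, hP, rfl⟩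
  have hw1 : ∑ i, (α i).toNNReal = 1 := by
    rw [← Real.toNNReal_sum_of_nonneg fun i _ => hα i, hα1, Real.toNNReal_one]
  exact sum_smul_mem_of_convex hC (fun _ _ => zero_le) hw1 fun i _ => hPP (hP i)

variable {PP : Set (Measure (RV d))} {Q : Measure (RV d)}

theorem nonempty_of_mem_finiteMixtures (hQ : Q ∈ finiteMixtures d PP) : PP.Nonempty := by
  rw [Set.nonempty_iff_ne_empty]
  rintro rfl
  exact finiteMixtures_subset_of_convex convex_empty subset_rfl hQ

theorem isProbabilityMeasure_of_mem_finiteMixtures (hPP : ∀ P ∈ PP, IsProbabilityMeasure P)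
    (hQ : Q ∈ finiteMixtures d PP) : IsProbabilityMeasure Q :=
  finiteMixtures_subset_of_convex convex_setOf_isProbabilityMeasure hPP hQ

theorem absolutelyContinuous_of_mem_finiteMixtures {ν : Measure (RV d)} (hPP : ∀ P ∈ PP, P ≪ ν)
    (hQ : Q ∈ finiteMixtures d PP) : Q ≪ ν :=
  finiteMixtures_subset_of_convex (convex_setOf_absolutelyContinuous ν) hPP hQ

end ConvexCombinations

section ProductMeasures

open Measure
open scoped NNReal ENNReal

theorem pi_withDensity {ι : Type*} [Fintype ι] {α : ι → Type*} [∀ i, MeasurableSpace (α i)]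
    (μ : ∀ i, Measure (α i)) [∀ i, IsProbabilityMeasure (μ i)] {f : ∀ i, α i → ℝ≥0∞}
    (hf : ∀ i, Measurable (f i)) [∀ i, SigmaFinite ((μ i).withDensity (f i))] :
    Measure.pi (fun i => (μ i).withDensity (f i)) =
      (Measure.pi μ).withDensity fun x => ∏ i, f i (x i) := by
  refine pi_eq fun A hA => ?_
  have hprod_indicator (x : ∀ i, α i) : (Set.univ.pi A).indicator (fun x => ∏ i, f i (x i)) x =
      ∏ i, (A i).indicator (f i) (x i) := by
    by_cases hx : x ∈ Set.univ.pi A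
    · rw [Set.indicator_of_mem hx]
      exact Finset.prod_congr rfl fun i _ => (Set.indicator_of_mem (hx i trivial) _).symm
    · rw [Set.indicator_of_notMem hx]
      obtain ⟨i, hi⟩ : ∃ i, x i ∉ A i := by simpa [Set.mem_pi] using hx
      exact (Finset.prod_eq_zero (Finset.mem_univ i) (Set.indicator_of_notMem hi _)).symm
  have hfA (i : ι) : Measurable ((A i).indicator (f i)) := (hf i).indicator (hA i)
  calc (Measure.pi μ).withDensity (fun x => ∏ i, f i (x i)) (Set.univ.pi A)
      = ∫⁻ x, ∏ i, (A i).indicator (f i) (x i) ∂Measure.pi μ := by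
        rw [withDensity_apply _ (.univ_pi hA), ← lintegral_indicator (.univ_pi hA),
          lintegral_congr hprod_indicator]
    _ = ∏ i, ∫⁻ x, (A i).indicator (f i) (x i) ∂Measure.pi μ :=
        lintegral_prod_eq_prod_lintegral_of_indepFun Finset.univ
          (fun i (x : ∀ i, α i) => (A i).indicator (f i) (x i))
          (iIndepFun_pi fun i => (hfA i).aemeasurable)
          fun i => (hfA i).comp (measurable_pi_apply i)
    _ = ∏ i, (μ i).withDensity (f i) (A i) := by
        refine Finset.prod_congr rfl fun i _ => ?_
        rw [(measurePreserving_eval μ i).lintegral_comp (hfA i), lintegral_indicator (hA i),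
          withDensity_apply _ (hA i)]

theorem pi_eq_withDensity_prod_rnDeriv {ι : Type*} [Fintype ι] {α : ι → Type*}
    [∀ i, MeasurableSpace (α i)] {μ ν : ∀ i, Measure (α i)} [∀ i, IsProbabilityMeasure (μ i)]
    [∀ i, SigmaFinite (ν i)] (hνμ : ∀ i, ν i ≪ μ i) :
    Measure.pi ν = (Measure.pi μ).withDensity fun x => ∏ i, (ν i).rnDeriv (μ i) (x i) := by
  rw [← pi_withDensity μ fun i => measurable_rnDeriv (ν i) (μ i)]
  simp only [withDensity_rnDeriv_eq _ _ (hνμ _)]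

theorem pi_absolutelyContinuous_pi {ι : Type*} [Fintype ι] {α : ι → Type*}
    [∀ i, MeasurableSpace (α i)] {μ ν : ∀ i, Measure (α i)} [∀ i, IsProbabilityMeasure (μ i)]
    [∀ i, SigmaFinite (ν i)] (hνμ : ∀ i, ν i ≪ μ i) : Measure.pi ν ≪ Measure.pi μ :=
  pi_eq_withDensity_prod_rnDeriv hνμ ▸ withDensity_absolutelyContinuous _ _

instance isProbabilityMeasure_update {ι : Type*} [DecidableEq ι] {X : ι → Type*}
    [∀ i, MeasurableSpace (X i)] (μ : ∀ i, Measure (X i)) [∀ i, IsProbabilityMeasure (μ i)]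
    (n : ι) (L : Measure (X n)) [IsProbabilityMeasure L] (i : ι) :
    IsProbabilityMeasure (Function.update μ n L i) := by
  rcases eq_or_ne i n with rfl | hi
  · rwa [Function.update_self]
  · rw [Function.update_of_ne hi]
    infer_instance

instance isProbabilityMeasure_piecewise {ι : Type*} {X : ι → Type*} [∀ i, MeasurableSpace (X i)]
    (s : Finset ι) [∀ i, Decidable (i ∈ s)] (μ ν : ∀ i, Measure (X i))
    [∀ i, IsProbabilityMeasure (μ i)] [∀ i, IsProbabilityMeasure (ν i)] (i : ι) :
    IsProbabilityMeasure (s.piecewise μ ν i) :=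
  s.piecewise_cases μ ν _ inferInstance inferInstance

theorem infinitePi_update_add_smul {ι : Type*} [DecidableEq ι] {X : ι → Type*}
    [∀ i, MeasurableSpace (X i)] (μ : ∀ i, Measure (X i)) [∀ i, IsProbabilityMeasure (μ i)]
    (n : ι) (L M : Measure (X n)) [IsProbabilityMeasure L] [IsProbabilityMeasure M] {a b : ℝ≥0}
    (hab : a + b = 1) :
    infinitePi (Function.update μ n (a • L + b • M)) =
      a • infinitePi (Function.update μ n L) + b • infinitePi (Function.update μ n M) := by
  have : IsProbabilityMeasure (a • L + b • M) :=
    convex_setOf_isProbabilityMeasure ‹_› ‹_› zero_le zero_le hab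
  refine (eq_infinitePi _ fun s t ht => ?_).symm
  rw [Measure.add_apply, Measure.smul_apply, Measure.smul_apply, infinitePi_pi _ fun i _ => ht i,
    infinitePi_pi _ fun i _ => ht i]
  by_cases hn : n ∈ s
  · have hprod (N : Measure (X n)) : ∏ i ∈ s, Function.update μ n N i (t i) =
        N (t n) * ∏ i ∈ s.erase n, μ i (t i) := by
      rw [← Finset.mul_prod_erase s _ hn, Function.update_self]
      congr 1
      exact Finset.prod_congr rfl fun i hi => by
        rw [Function.update_of_ne (Finset.ne_of_mem_erase hi)]
    rw [hprod, hprod, hprod, Measure.add_apply, Measure.smul_apply, Measure.smul_apply,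
      add_mul, smul_mul_assoc, smul_mul_assoc]
  · have hprod (N : Measure (X n)) : ∏ i ∈ s, Function.update μ n N i (t i) =
        ∏ i ∈ s, μ i (t i) :=
      Finset.prod_congr rfl fun i hi => by
        rw [Function.update_of_ne (ne_of_mem_of_not_mem hi hn)]
    rw [hprod, hprod, hprod, ← add_smul, hab, one_smul]

theorem convex_setOf_infinitePi_update_mem {ι : Type*} [DecidableEq ι] {X : ι → Type*}
    [∀ i, MeasurableSpace (X i)] (μ : ∀ i, Measure (X i)) [∀ i, IsProbabilityMeasure (μ i)]
    (n : ι) {C : Set (Measure (∀ i, X i))} (hC : Convex ℝ≥0 C) :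
    Convex ℝ≥0 {L | IsProbabilityMeasure L ∧ infinitePi (Function.update μ n L) ∈ C} := by
  rintro L ⟨_, hLC⟩ M ⟨_, hMC⟩ a b ha hb hab
  refine ⟨convex_setOf_isProbabilityMeasure ‹_› ‹_› ha hb hab, ?_⟩
  rw [infinitePi_update_add_smul μ n L M hab]
  exact hC hLC hMC ha hb hab

end ProductMeasures

section SequentialLaws

open Measure
open scoped NNReal

variable {d : ℕ}

/-- The probability laws on the sequence space that are locally absolutely continuous with respect
to `Γ` (the paper's `𝙿 ≪_loc 𝚪`), on which fork-convex combinations are defined. -/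
def locACLaws (Γ : Measure (Seq d)) : Set (Measure (Seq d)) :=
  {μ | IsProbabilityMeasure μ ∧ LocAC d μ Γ}

theorem measurable_prefixMap (t : ℕ) : Measurable (prefixMap d t) :=
  measurable_pi_lambda _ fun s => measurable_pi_apply (s : ℕ)

theorem measurable_F_prefixMap (t : ℕ) : Measurable[F d t] (prefixMap d t) := by
  refine @measurable_pi_lambda _ _ _ (F d t) _ _ fun s => ?_
  rw [measurable_iff_comap_le]
  exact le_iSup₂_of_le (f := fun j (_ : j ∈ Finset.range t) =>
    MeasurableSpace.comap (fun ω : Seq d => ω j) inferInstance) s (Finset.mem_range.mpr s.2) le_rfl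

theorem measurable_F_Z (μ Γ : Measure (Seq d)) (t : ℕ) : Measurable[F d t] (Z d μ Γ t) :=
  (measurable_rnDeriv _ _).ennreal_toReal.comp (measurable_F_prefixMap t)

instance isFiniteMeasure_prefixLaw (μ : Measure (Seq d)) [IsFiniteMeasure μ] (t : ℕ) :
    IsFiniteMeasure (prefixLaw d μ t) :=
  isFiniteMeasure_map μ (prefixMap d t)

instance isProbabilityMeasure_prefixLaw (μ : Measure (Seq d)) [IsProbabilityMeasure μ] (t : ℕ) :
    IsProbabilityMeasure (prefixLaw d μ t) :=
  isProbabilityMeasure_map (measurable_prefixMap t).aemeasurable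

theorem prefixLaw_add_smul (μ ν : Measure (Seq d)) (a b : ℝ≥0) (t : ℕ) :
    prefixLaw d (a • μ + b • ν) t = a • prefixLaw d μ t + b • prefixLaw d ν t := by
  rw [prefixLaw, Measure.map_add _ _ (measurable_prefixMap t), Measure.map_smul, Measure.map_smul]
  rfl

theorem convex_locACLaws (Γ : Measure (Seq d)) : Convex ℝ≥0 (locACLaws Γ) := by
  rintro μ ⟨hμ, hμΓ⟩ ν ⟨hν, hνΓ⟩ a b ha hb hab
  refine ⟨convex_setOf_isProbabilityMeasure hμ hν ha hb hab, fun t => ?_⟩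
  rw [prefixLaw_add_smul]
  exact convex_setOf_absolutelyContinuous _ (hμΓ t) (hνΓ t) ha hb hab

theorem Z_add_smul_ae_eq (μ ν Γ : Measure (Seq d)) [IsFiniteMeasure μ]
    [IsFiniteMeasure ν] [IsFiniteMeasure Γ] (a b : ℝ≥0) (t : ℕ) :
    Z d (a • μ + b • ν) Γ t =ᵐ[Γ] fun ω => a * Z d μ Γ t ω + b * Z d ν Γ t ω := by
  refine ae_of_ae_map (measurable_prefixMap t).aemeasurable
    (p := fun x => ((prefixLaw d (a • μ + b • ν) t).rnDeriv (prefixLaw d Γ t) x).toReal =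
      a * ((prefixLaw d μ t).rnDeriv (prefixLaw d Γ t) x).toReal +
      b * ((prefixLaw d ν t).rnDeriv (prefixLaw d Γ t) x).toReal) ?_
  rw [prefixLaw_add_smul]
  filter_upwards [
    rnDeriv_add (a • prefixLaw d μ t) (b • prefixLaw d ν t) (prefixLaw d Γ t),
    rnDeriv_smul_left (prefixLaw d μ t) (prefixLaw d Γ t) a,
    rnDeriv_smul_left (prefixLaw d ν t) (prefixLaw d Γ t) b,
    rnDeriv_ne_top (prefixLaw d μ t) (prefixLaw d Γ t),
    rnDeriv_ne_top (prefixLaw d ν t) (prefixLaw d Γ t)] with x hadd hμ hν hμ_top hν_top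
  rw [hadd, Pi.add_apply, hμ, hν, Pi.smul_apply, Pi.smul_apply, ENNReal.smul_def, ENNReal.smul_def,
    smul_eq_mul, smul_eq_mul, ENNReal.toReal_add (by finiteness) (by finiteness),
    ENNReal.toReal_mul, ENNReal.toReal_mul, ENNReal.coe_toReal, ENNReal.coe_toReal]

theorem Z_zero_ae_eq (μ Γ : Measure (Seq d)) [IsProbabilityMeasure μ] [IsProbabilityMeasure Γ] :
    Z d μ Γ 0 =ᵐ[Γ] 1 := by
  have hμΓ : prefixLaw d μ 0 = prefixLaw d Γ 0 :=
    Measure.ext fun A _ => Subsingleton.set_cases (by rw [measure_empty, measure_empty])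
      (by rw [measure_univ, measure_univ]) A
  filter_upwards [ae_of_ae_map (measurable_prefixMap 0).aemeasurable
    (rnDeriv_self (prefixLaw d Γ 0))] with ω hω
  rw [Z, hμΓ, hω, ENNReal.toReal_one, Pi.one_apply]

theorem IsForkConvex.convex_inter_locACLaws {Γ : Measure (Seq d)} [IsProbabilityMeasure Γ]
    {S : Set (Measure (Seq d))} (hS : IsForkConvex d Γ S) : Convex ℝ≥0 (S ∩ locACLaws Γ) := by
  rintro μ ⟨hμS, hμ⟩ ν ⟨hνS, hν⟩ a b ha hb hab
  have hR : a • μ + b • ν ∈ locACLaws Γ := convex_locACLaws Γ hμ hν ha hb hab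
  have := hμ.1
  have := hν.1
  have := hR.1
  have hab' : (a : ℝ) + b = 1 := by exact_mod_cast hab
  refine ⟨hS μ hμS ν hνS 0 (fun _ => a) _ ⟨hμ.1, hν.1, hμ.2, hν.2, measurable_const,
    fun _ => ⟨a.2, by linarith [b.2]⟩, ?_, hR.1, hR.2, fun t => ?_⟩, hR⟩
  · rw [measure_eq_zero_iff_ae_notMem]
    filter_upwards [Z_zero_ae_eq ν Γ] with ω hω
    simp [hω]
  · filter_upwards [Z_add_smul_ae_eq μ ν Γ a b t, Z_zero_ae_eq μ Γ, Z_zero_ae_eq ν Γ,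
      Z_zero_ae_eq (a • μ + b • ν) Γ] with ω h hμ0 hν0 hR0
    split_ifs with ht
    · rw [Nat.le_zero.mp ht, hR0, hμ0]
    · rw [h, hμ0, hν0, ← eq_sub_of_add_eq' hab']
      simp only [Pi.one_apply, div_one, mul_one]

theorem subset_fconv (Γ : Measure (Seq d)) (S : Set (Measure (Seq d))) : S ⊆ fconv d Γ S :=
  Set.subset_sInter fun _ hT => hT.1

theorem isForkConvex_fconv (Γ : Measure (Seq d)) (S : Set (Measure (Seq d))) :
    IsForkConvex d Γ (fconv d Γ S) :=
  fun P hP Q hQ s h R hR T hT => hT.2 P (hP T hT) Q (hQ T hT) s h R hR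

theorem tendstoLocL1_of_eventually_prefixLaw_eq {Γ μ : Measure (Seq d)} {μs : ℕ → Measure (Seq d)}
    (h : ∀ t, ∀ᶠ n in atTop, prefixLaw d (μs n) t = prefixLaw d μ t) :
    TendstoLocL1 d Γ μs μ := fun t => by
  refine tendsto_const_nhds.congr' ?_
  filter_upwards [h t] with n hn
  simp only [Z, hn, sub_self, abs_zero, integral_zero]

end SequentialLaws

section ProductLaws

open Measure

variable {d : ℕ} {G Ps Qs : ℕ → Measure (RV d)} [∀ j, IsProbabilityMeasure (G j)]
  [∀ j, IsProbabilityMeasure (Ps j)] [∀ j, IsProbabilityMeasure (Qs j)]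

variable (Ps) in
theorem prefixLaw_infinitePi (t : ℕ) :
    prefixLaw d (infinitePi Ps) t = Measure.pi fun s : Fin t => Ps s := by
  rw [← infinitePi_eq_pi]
  exact map_infinitePi_infinitePi_of_inj Fin.val_injective

variable (Ps) in
theorem isProductLaw_infinitePi : IsProductLaw d (infinitePi Ps) Ps :=
  ⟨inferInstance, fun t A _ => by rw [prefixLaw_infinitePi, pi_pi]⟩

theorem IsProductLaw.eq_infinitePi {μ : Measure (Seq d)} (hμ : IsProductLaw d μ Ps) :
    μ = infinitePi Ps := by
  refine (isProjectiveLimit_infinitePi Ps).unique (fun I => ?_) |>.symm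
  obtain ⟨t, ht⟩ := I.exists_nat_subset_range
  let restrictPrefix (x : Fin t → RV d) (i : I) : RV d := x ⟨i, Finset.mem_range.mp (ht i.2)⟩
  have hrestrict : I.restrict = restrictPrefix ∘ prefixMap d t := rfl
  have hmeas : Measurable restrictPrefix := by fun_prop
  have hprefix : prefixLaw d μ t = prefixLaw d (infinitePi Ps) t := by
    rw [prefixLaw_infinitePi]
    exact (pi_eq fun A hA => hμ.2 t A hA).symm
  rw [← infinitePi_map_restrict, hrestrict, ← map_map hmeas (measurable_prefixMap t),
    ← map_map hmeas (measurable_prefixMap t)]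
  exact congrArg (Measure.map restrictPrefix) hprefix

theorem infinitePi_mem_locACLaws (hPG : ∀ j, Ps j ≪ G j) :
    infinitePi Ps ∈ locACLaws (infinitePi G) := by
  refine ⟨inferInstance, fun t => ?_⟩
  rw [prefixLaw_infinitePi, prefixLaw_infinitePi]
  exact pi_absolutelyContinuous_pi fun s => hPG s

theorem Z_infinitePi_ae_eq (hPG : ∀ j, Ps j ≪ G j) (t : ℕ) :
    Z d (infinitePi Ps) (infinitePi G) t =ᵐ[infinitePi G]
      fun ω => ∏ j ∈ Finset.range t, ((Ps j).rnDeriv (G j) (ω j)).toReal := by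
  have hmeas : Measurable fun x : Fin t → RV d => ∏ s : Fin t, (Ps s).rnDeriv (G s) (x s) := by
    fun_prop
  have hdensity : (prefixLaw d (infinitePi Ps) t).rnDeriv (prefixLaw d (infinitePi G) t)
      =ᵐ[prefixLaw d (infinitePi G) t] fun x => ∏ s : Fin t, (Ps s).rnDeriv (G s) (x s) := by
    rw [prefixLaw_infinitePi, prefixLaw_infinitePi,
      pi_eq_withDensity_prod_rnDeriv fun s : Fin t => hPG s]
    exact rnDeriv_withDensity _ hmeas
  filter_upwards [ae_of_ae_map (measurable_prefixMap t).aemeasurable hdensity] with ω hω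
  rw [Z, hω, ENNReal.toReal_prod, Finset.prod_range]
  rfl

theorem infinitePi_ae_rnDeriv_eq_zero_imp {s : Finset ℕ} (hPQ : ∀ j ∈ s, Ps j ≪ Qs j) :
    ∀ᵐ ω ∂infinitePi G, ∀ j ∈ s, ((Qs j).rnDeriv (G j) (ω j)).toReal = 0 →
      ((Ps j).rnDeriv (G j) (ω j)).toReal = 0 := by
  refine (ae_ball_iff s.countable_toSet).mpr fun j hj => ?_
  refine (measurePreserving_eval_infinitePi G j).quasiMeasurePreserving.ae
    (p := fun x => ((Qs j).rnDeriv (G j) x).toReal = 0 → ((Ps j).rnDeriv (G j) x).toReal = 0) ?_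
  filter_upwards [rnDeriv_mul_rnDeriv (κ := G j) (hPQ j hj), rnDeriv_ne_top (Qs j) (G j)]
    with x hchain htop hzero
  rw [← hchain, Pi.mul_apply, (ENNReal.toReal_eq_zero_iff _).mp hzero |>.resolve_right htop,
    mul_zero, ENNReal.toReal_zero]

theorem Z_infinitePi_ae_eq_zero_imp (hPG : ∀ j, Ps j ≪ G j) (hQG : ∀ j, Qs j ≪ G j) {s t : ℕ}
    (hst : s ≤ t) (hPQ : ∀ j ∈ Finset.range s, Ps j ≪ Qs j) :
    ∀ᵐ ω ∂infinitePi G, Z d (infinitePi Qs) (infinitePi G) s ω = 0 →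
      Z d (infinitePi Ps) (infinitePi G) t ω = 0 := by
  filter_upwards [Z_infinitePi_ae_eq hPG t, Z_infinitePi_ae_eq hQG s,
    infinitePi_ae_rnDeriv_eq_zero_imp (G := G) hPQ] with ω hP hQ hω hzero
  obtain ⟨j, hj, hQj⟩ := Finset.prod_eq_zero_iff.mp (hQ ▸ hzero)
  rw [hP, Finset.prod_eq_zero (Finset.range_mono hst hj) (hω j hj hQj)]

theorem Z_infinitePi_piecewise_ae_eq (hPG : ∀ j, Ps j ≪ G j) (hQG : ∀ j, Qs j ≪ G j) {s : ℕ}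
    (hPQ : ∀ j ∈ Finset.range s, Ps j ≪ Qs j) (t : ℕ) :
    Z d (infinitePi ((Finset.range s).piecewise Ps Qs)) (infinitePi G) t =ᵐ[infinitePi G]
      fun ω => if t ≤ s then Z d (infinitePi Ps) (infinitePi G) t ω
        else Z d (infinitePi Qs) (infinitePi G) t ω *
          (Z d (infinitePi Ps) (infinitePi G) s ω / Z d (infinitePi Qs) (infinitePi G) s ω) := by
  have hRG (j : ℕ) : (Finset.range s).piecewise Ps Qs j ≪ G j :=
    (Finset.range s).piecewise_cases Ps Qs (· ≪ G j) (hPG j) (hQG j)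
  filter_upwards [Z_infinitePi_ae_eq hRG t, Z_infinitePi_ae_eq hPG t, Z_infinitePi_ae_eq hQG t,
    Z_infinitePi_ae_eq hPG s, Z_infinitePi_ae_eq hQG s,
    infinitePi_ae_rnDeriv_eq_zero_imp (G := G) hPQ] with ω hR hPt hQt hPs hQs hω
  have hpiecewise (j : ℕ) : (((Finset.range s).piecewise Ps Qs j).rnDeriv (G j) (ω j)).toReal =
      (Finset.range s).piecewise (fun j => ((Ps j).rnDeriv (G j) (ω j)).toReal)
        (fun j => ((Qs j).rnDeriv (G j) (ω j)).toReal) j := by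
    unfold Finset.piecewise
    split_ifs <;> rfl
  simp only [hR, hPt, hQt, hPs, hQs, hpiecewise]
  split_ifs with hts
  · exact Finset.prod_congr rfl fun j hj =>
      Finset.piecewise_eq_of_mem _ _ _ (Finset.range_mono hts hj)
  · exact prod_piecewise_eq_mul_div (Finset.range_mono (not_le.mp hts).le) hω

theorem IsForkConvex.infinitePi_piecewise_mem {S : Set (Measure (Seq d))}
    (hS : IsForkConvex d (infinitePi G) S) (hP : infinitePi Ps ∈ S) (hQ : infinitePi Qs ∈ S)
    (hPG : ∀ j, Ps j ≪ G j) (hQG : ∀ j, Qs j ≪ G j) {s : ℕ}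
    (hPQ : ∀ j ∈ Finset.range s, Ps j ≪ Qs j) :
    infinitePi ((Finset.range s).piecewise Ps Qs) ∈ S := by
  -- Admissibility forces `h = 1` where `Z_s^𝚀 = 0`; there both densities vanish after time `s`.
  let zeros : Set (Seq d) := {ω | Z d (infinitePi Qs) (infinitePi G) s ω = 0}
  let h : Seq d → ℝ := zeros.indicator 1
  have hR : infinitePi ((Finset.range s).piecewise Ps Qs) ∈ locACLaws (infinitePi G) :=
    infinitePi_mem_locACLaws fun j =>
      (Finset.range s).piecewise_cases Ps Qs (· ≪ G j) (hPG j) (hQG j)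
  have hh_meas : Measurable[F d s] h :=
    (measurable_const (a := (1 : ℝ))).indicator
      (measurable_F_Z _ _ s (measurableSet_singleton 0))
  have hh_mem (ω : Seq d) : h ω ∈ Set.Icc (0 : ℝ) 1 :=
    ⟨Set.indicator_nonneg (fun _ _ => zero_le_one) ω,
      Set.indicator_le_self' (fun _ _ => zero_le_one) ω⟩
  have hadmissible : {ω | h ω < 1 ∧ ω ∈ zeros} = ∅ :=
    Set.eq_empty_of_forall_notMem fun ω hω => hω.1.ne (Set.indicator_of_mem hω.2 1)
  refine hS _ hP _ hQ s h _ ⟨inferInstance, inferInstance, (infinitePi_mem_locACLaws hPG).2,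
    (infinitePi_mem_locACLaws hQG).2, hh_meas, hh_mem, hadmissible ▸ measure_empty, hR.1, hR.2,
    fun t => ?_⟩
  rcases le_or_gt t s with hts | hst
  · filter_upwards [Z_infinitePi_piecewise_ae_eq hPG hQG hPQ t] with ω hω
    rw [hω, if_pos hts, if_pos hts]
  · filter_upwards [Z_infinitePi_piecewise_ae_eq hPG hQG hPQ t,
      Z_infinitePi_ae_eq_zero_imp hPG hQG hst.le hPQ] with ω hω hzero
    rw [hω, if_neg hst.not_ge, if_neg hst.not_ge]
    by_cases hQs : Z d (infinitePi Qs) (infinitePi G) s ω = 0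
    · have hh : h ω = 1 := Set.indicator_of_mem (s := zeros) hQs 1
      rw [hh, hzero hQs, hQs, div_zero]
      ring
    · have hh : h ω = 0 := Set.indicator_of_notMem (s := zeros) hQs 1
      rw [hh]
      ring

theorem IsForkConvex.infinitePi_update_finiteMixtures_mem {S : Set (Measure (Seq d))}
    (hS : IsForkConvex d (infinitePi G) S) (hPG : ∀ j, Ps j ≪ G j) {n : ℕ}
    {PP : Set (Measure (RV d))} (hPP : ∀ L ∈ PP, ∃ _ : IsProbabilityMeasure L,
      L ≪ G n ∧ infinitePi (Function.update Ps n L) ∈ S) {R : Measure (RV d)}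
    (hR : R ∈ finiteMixtures d PP) : infinitePi (Function.update Ps n R) ∈ S := by
  refine (finiteMixtures_subset_of_convex
    (convex_setOf_infinitePi_update_mem Ps n hS.convex_inter_locACLaws) (fun L hL => ?_) hR).2.1
  obtain ⟨_, hLG, hLS⟩ := hPP L hL
  refine ⟨‹_›, hLS, infinitePi_mem_locACLaws ?_⟩
  exact (Function.forall_update_iff Ps fun j μ => μ ≪ G j).mpr ⟨hLG, fun j _ => hPG j⟩

theorem IsForkConvex.infinitePi_piecewise_finiteMixtures_mem {S : Set (Measure (Seq d))}
    (hS : IsForkConvex d (infinitePi G) S) {PP : Set (Measure (RV d))}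
    (hPP : ∀ P ∈ PP, ∃ _ : IsProbabilityMeasure P, infinitePi (fun _ => P) ∈ S)
    (hG : ∀ P ∈ PP, ∀ j, P ≪ G j) (hmac : ∀ P ∈ PP, ∀ Q ∈ PP, P ≪ Q)
    (hPs : ∀ j, Ps j ∈ finiteMixtures d PP) (n : ℕ) :
    ∀ M ∈ PP, infinitePi ((Finset.range n).piecewise Ps fun _ => M) ∈ S := by
  have hPsG (j : ℕ) : Ps j ≪ G j :=
    absolutelyContinuous_of_mem_finiteMixtures (fun P hP => hG P hP j) (hPs j)
  have hPsPP (j : ℕ) {M : Measure (RV d)} (hM : M ∈ PP) : Ps j ≪ M :=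
    absolutelyContinuous_of_mem_finiteMixtures (fun P hP => hmac P hP M hM) (hPs j)
  have hpiecewise {L M : Measure (RV d)} (j k : ℕ) (hP : Ps j ≪ M) (hL : L ≪ M) :
      (Finset.range k).piecewise Ps (fun _ => L) j ≪ M :=
    (Finset.range k).piecewise_cases Ps _ (· ≪ M) hP hL
  induction n with
  | zero =>
    intro M hM
    have hconst : (Finset.range 0).piecewise Ps (fun _ => M) = fun _ => M :=
      Finset.piecewise_empty _ _
    exact hconst ▸ (hPP M hM).2
  | succ n ih =>
    intro M hM
    have := (hPP M hM).1
    rw [Finset.range_add_one, Finset.piecewise_insert]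
    refine hS.infinitePi_update_finiteMixtures_mem
      (fun j => hpiecewise j n (hPsG j) (hG M hM j)) (fun L hL => ?_) (hPs n)
    have := (hPP L hL).1
    refine ⟨this, hG L hL n, ?_⟩
    have hfork : infinitePi ((Finset.range (n + 1)).piecewise
        ((Finset.range n).piecewise Ps fun _ => L) fun _ => M) ∈ S :=
      hS.infinitePi_piecewise_mem (ih L hL) (hPP M hM).2
        (fun j => hpiecewise j n (hPsG j) (hG L hL j)) (fun j => hG M hM j)
        fun j _ => hpiecewise j n (hPsPP j hM) (hmac L hL M hM)
    rwa [Finset.range_add_one, Finset.piecewise_insert, Finset.piecewise_idem_left,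
      Finset.piecewise_eq_of_notMem _ _ _ Finset.notMem_range_self] at hfork

end ProductLaws

instance isProbabilityMeasure_stdGaussian : IsProbabilityMeasure (stdGaussian d) :=
  inferInstanceAs (IsProbabilityMeasure (Measure.pi _))

theorem volume_absolutelyContinuous_stdGaussian :
    (volume : Measure (RV d)) ≪ stdGaussian d :=
  pi_absolutelyContinuous_pi fun _ => gaussianReal_absolutelyContinuous' 0 one_ne_zero

open Measure in
theorem statement6_general {d : ℕ} {Γ : Measure (Seq d)} {G : ℕ → Measure (RV d)}
    [∀ j, IsProbabilityMeasure (G j)] (hΓ : IsProductLaw d Γ G) {PP : Set (Measure (RV d))}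
    (hprob : ∀ P ∈ PP, IsProbabilityMeasure P) (hG : ∀ P ∈ PP, ∀ j, P ≪ G j)
    (hmac : ∀ P ∈ PP, ∀ Q ∈ PP, P ≪ Q) :
    productLaws d (finiteMixtures d PP) ⊆ clfconv d Γ (iidLaws d PP) := by
  rintro μ ⟨Rs, hRs, hμ⟩
  have hRs_prob (j : ℕ) : IsProbabilityMeasure (Rs j) :=
    isProbabilityMeasure_of_mem_finiteMixtures hprob (hRs j)
  have hRsG (j : ℕ) : Rs j ≪ G j :=
    absolutelyContinuous_of_mem_finiteMixtures (fun P hP => hG P hP j) (hRs j)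
  obtain ⟨M, hM⟩ := nonempty_of_mem_finiteMixtures (hRs 0)
  have := hprob M hM
  rw [hΓ.eq_infinitePi, hμ.eq_infinitePi]
  have hiid (P : Measure (RV d)) (hP : P ∈ PP) : ∃ _ : IsProbabilityMeasure P,
      infinitePi (fun _ => P) ∈ fconv d (infinitePi G) (iidLaws d PP) :=
    have := hprob P hP
    ⟨this, subset_fconv _ _ ⟨P, hP, isProductLaw_infinitePi fun _ => P⟩⟩
  refine ⟨inferInstance, (infinitePi_mem_locACLaws hRsG).2,
    fun n => infinitePi ((Finset.range n).piecewise Rs fun _ => M),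
    fun n => (isForkConvex_fconv _ _).infinitePi_piecewise_finiteMixtures_mem hiid hG hmac hRs n
      M hM, tendstoLocL1_of_eventually_prefixLaw_eq fun t => ?_⟩
  filter_upwards [eventually_ge_atTop t] with n hn
  rw [prefixLaw_infinitePi, prefixLaw_infinitePi]
  refine congrArg Measure.pi (funext fun s => ?_)
  exact Finset.piecewise_eq_of_mem _ _ _ (Finset.mem_range.mpr (s.2.trans_le hn))

/-- The closed fork-convex hull of the i.i.d. laws over a m.a.c. family `PP`
with densities contains all i.i.d. laws over finite mixtures of `PP`. -/
theorem statement6 (Γ : Measure (Seq d)) (hΓ : IsGamma d Γ)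
    (PP : Set (Measure (RV d)))
    (hdens : ∀ P ∈ PP, IsProbabilityMeasure P ∧ P ≪ (volume : Measure (RV d)))
    (hmac : ∀ P ∈ PP, ∀ Q ∈ PP, P ≪ Q) :
    iidLaws d (finiteMixtures d PP) ⊆ clfconv d Γ (iidLaws d PP) := fun _ ⟨R, hR, hμ⟩ =>
  statement6_general (G := fun _ => stdGaussian d) hΓ (fun P hP => (hdens P hP).1)
    (fun P hP _ => (hdens P hP).2.trans (volume_absolutelyContinuous_stdGaussian d)) hmac
    ⟨fun _ => R, fun _ => hR, hμ⟩

end SeqTest
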